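/- Let H be a complex Hilbert space and V : H → H a bounded linear isometry (V*V = 1) that is not unitary (VV* ≠ 1). Then the UCP map Φ : B(H) → B(H), Φ(a) = V*aV, satisfies Φ(1) = 1, Φ(V) = V, and Φ(V*) = V*, but Φ(VV*) = 1 ≠ VV*. Consequently, the identity representation of the C*-algebra A generated by {1, V, V*} is not a weak boundary representation for the operator system span{1, V, V*}, and span{1, V, V*} is not quasi hyperrigid in A. -/

import Mathlib

/-!
Since `V*V = 1`, compression by `V` fixes `1`, `V` and `V*`, hence by linearity their span,
whereas `V*(VV*)V = 1`, which differs from `VV*` because `V` is not unitary.  As `VV*` lies in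
`C*({1, V, V*})`, the isometry `W = V` violates the weak boundary relation for the identity
representation, and that representation in turn violates quasi hyperrigidity.
Complete positivity of the compression is the factorization
`V*(N*N)V = (NV)*(NV)`, taken entrywise in the matrix amplifications.
-/

noncomputable section

/-- An element of a matrix algebra over a star ring is *positive* if it factors as `Nᴴ * N`. -/
def IsPosMat {A : Type*} [NonUnitalSemiring A] [StarRing A] {k : ℕ}
    (M : Matrix (Fin k) (Fin k) A) : Prop :=
  ∃ N : Matrix (Fin k) (Fin k) A, M = star N * N

/-- A linear map between star algebras is *completely positive* if all its matrix
amplifications preserve positivity. -/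
def IsCPMap {A : Type*} [NonUnitalSemiring A] [StarRing A] [Module ℂ A]
    {B : Type*} [NonUnitalSemiring B] [StarRing B] [Module ℂ B] (φ : A →ₗ[ℂ] B) : Prop :=
  ∀ (k : ℕ) (M : Matrix (Fin k) (Fin k) A), IsPosMat M → IsPosMat (M.map ⇑φ)

/-- The defining property of a weak boundary representation (no irreducibility assumed):
the only UCP map of the form `W*π(·)W`, `W` an isometry, agreeing with `π` on `S` is `π`. -/
def WeakBoundaryRel {A : Type*} [Semiring A] [Algebra ℂ A] [Star A]
    {H : Type*} [NormedAddCommGroup H] [InnerProductSpace ℂ H] [CompleteSpace H]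
    (S : Set A) (π : A →⋆ₐ[ℂ] (H →L[ℂ] H)) : Prop :=
  ∀ W : H →L[ℂ] H, star W * W = 1 →
    (∀ s ∈ S, star W * π s * W = π s) → ∀ a : A, star W * π a * W = π a

/-- A set of generators is *quasi hyperrigid* if every (nondegenerate, i.e. unital)
representation satisfies the weak boundary relation. -/
def QuasiHyperrigid.{u', v'} {A : Type u'} [Semiring A] [Algebra ℂ A] [Star A]
    (S : Set A) : Prop :=
  ∀ (H : Type v') [NormedAddCommGroup H] [InnerProductSpace ℂ H] [CompleteSpace H]
    (π : A →⋆ₐ[ℂ] (H →L[ℂ] H)), WeakBoundaryRel S π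

universe v

/-- The compression `a ↦ V*aV` as a linear map. -/
def compression {H : Type v} [NormedAddCommGroup H] [InnerProductSpace ℂ H] [CompleteSpace H]
    (V : H →L[ℂ] H) : (H →L[ℂ] H) →ₗ[ℂ] (H →L[ℂ] H) :=
  LinearMap.mulRight ℂ V ∘ₗ LinearMap.mulLeft ℂ (star V)

theorem compression_apply {H : Type v} [NormedAddCommGroup H] [InnerProductSpace ℂ H]
    [CompleteSpace H] (V a : H →L[ℂ] H) : compression V a = star V * a * V := rfl

theorem isCPMap_compression {H : Type v} [NormedAddCommGroup H] [InnerProductSpace ℂ H]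
    [CompleteSpace H] (V : H →L[ℂ] H) : IsCPMap (compression V) := by
  rintro k M ⟨N, rfl⟩
  refine ⟨N.map (fun a => a * V), ?_⟩
  ext1 i j
  simp only [Matrix.map_apply, Matrix.mul_apply, Matrix.star_apply, map_sum, compression_apply,
    star_mul, mul_assoc]

theorem compression_eq_self_of_mem_span {H : Type v} [NormedAddCommGroup H]
    [InnerProductSpace ℂ H] [CompleteSpace H] {V : H →L[ℂ] H} (hiso : star V * V = 1)
    {a : H →L[ℂ] H} (ha : a ∈ Submodule.span ℂ ({1, V, star V} : Set (H →L[ℂ] H))) :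
    compression V a = a := by
  have h : Set.EqOn (compression V) (LinearMap.id : (H →L[ℂ] H) →ₗ[ℂ] (H →L[ℂ] H))
      {1, V, star V} := by
    rintro x (rfl | rfl | rfl)
    · simp [compression_apply, hiso]
    · simp [compression_apply, hiso]
    · simp [compression_apply, mul_assoc, hiso]
  exact LinearMap.eqOn_span h ha

theorem compression_range_projection {H : Type v} [NormedAddCommGroup H]
    [InnerProductSpace ℂ H] [CompleteSpace H] {V : H →L[ℂ] H} (hiso : star V * V = 1) :
    compression V (V * star V) = 1 := by
  rw [compression_apply, ← mul_assoc, hiso, one_mul, hiso]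

/-- Let `V` be a non-unitary isometry on a Hilbert space `H`.  Then the
UCP map `Φ(a) = V*aV` fixes `1`, `V` and `V*`, but `Φ(VV*) = 1 ≠ VV*`.  Consequently the
identity representation of `A = C*({1, V, V*})` does not satisfy the weak boundary
property for the operator system `span{1, V, V*}`, and `span{1, V, V*}` is not quasi
hyperrigid in `A`. -/
theorem nonunitary_isometry_not_weakBoundary_not_quasiHyperrigid
    {H : Type v} [NormedAddCommGroup H] [InnerProductSpace ℂ H] [CompleteSpace H]
    (V : H →L[ℂ] H) (hiso : star V * V = 1) (hnotu : V * star V ≠ 1) :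
    (∃ Φ : (H →L[ℂ] H) →ₗ[ℂ] (H →L[ℂ] H),
      (∀ a : H →L[ℂ] H, Φ a = star V * a * V) ∧ IsCPMap Φ ∧
      Φ 1 = 1 ∧ Φ V = V ∧ Φ (star V) = star V ∧
      Φ (V * star V) = 1 ∧ Φ (V * star V) ≠ V * star V) ∧
    (¬ WeakBoundaryRel
        {x : ↥((StarAlgebra.adjoin ℂ ({1, V, star V} : Set (H →L[ℂ] H))).topologicalClosure) |
          (x : H →L[ℂ] H) ∈ Submodule.span ℂ ({1, V, star V} : Set (H →L[ℂ] H))}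
        ((StarAlgebra.adjoin ℂ ({1, V, star V} : Set (H →L[ℂ] H))).topologicalClosure.subtype)) ∧
    ¬ QuasiHyperrigid.{v, v}
        {x : ↥((StarAlgebra.adjoin ℂ ({1, V, star V} : Set (H →L[ℂ] H))).topologicalClosure) |
          (x : H →L[ℂ] H) ∈ Submodule.span ℂ ({1, V, star V} : Set (H →L[ℂ] H))} := by
  have hspan : ∀ x ∈ ({1, V, star V} : Set (H →L[ℂ] H)), compression V x = x := fun x hx =>
    compression_eq_self_of_mem_span hiso (Submodule.subset_span hx)
  have hproj := compression_range_projection hiso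
  have hweak : ¬ WeakBoundaryRel
        {x : ↥((StarAlgebra.adjoin ℂ ({1, V, star V} : Set (H →L[ℂ] H))).topologicalClosure) |
          (x : H →L[ℂ] H) ∈ Submodule.span ℂ ({1, V, star V} : Set (H →L[ℂ] H))}
        ((StarAlgebra.adjoin ℂ
          ({1, V, star V} : Set (H →L[ℂ] H))).topologicalClosure.subtype) := by
    intro h
    have hV : V ∈ StarAlgebra.adjoin ℂ ({1, V, star V} : Set (H →L[ℂ] H)) :=
      StarAlgebra.subset_adjoin ℂ _ (by simp)
    have hmem : V * star V ∈
        (StarAlgebra.adjoin ℂ ({1, V, star V} : Set (H →L[ℂ] H))).topologicalClosure :=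
      StarSubalgebra.le_topologicalClosure _ (mul_mem hV (star_mem hV))
    have key : compression V (V * star V) = V * star V :=
      h V hiso (fun s hs => compression_eq_self_of_mem_span hiso hs) ⟨V * star V, hmem⟩
    exact hnotu (key.symm.trans hproj)
  refine ⟨⟨compression V, compression_apply V, isCPMap_compression V, hspan _ (by simp),
    hspan _ (by simp), hspan _ (by simp), hproj, ?_⟩, hweak, fun h => hweak (h H _)⟩
  rw [hproj]
  exact hnotu.symm

end
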